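/- (Poincaré inequality for the degenerate weights) There exists a constant C > 0 such that for every u ∈ C_c^∞(Ω), ∫_Ω u² dxdy ≤ C ∫_Ω |y^{α₁}∂ₓu|² + |x^{α₂}∂_yu|² dxdy. -/

import Mathlib

open MeasureTheory Set Filter

noncomputable section

/-- The open unit square `Ω = (0,1) × (0,1)` in `ℝ²`. -/
def Omega : Set (ℝ × ℝ) := Ioo (0:ℝ) 1 ×ˢ Ioo (0:ℝ) 1

/-- Test functions on a set `s`: smooth with compact support contained in `s`. -/
def IsTestOn (s : Set (ℝ × ℝ)) (φ : ℝ × ℝ → ℝ) : Prop :=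
  ContDiff ℝ (⊤ : ℕ∞) φ ∧ HasCompactSupport φ ∧ tsupport φ ⊆ s

/-- Classical partial derivative in the `x`-direction. -/
def pdx (φ : ℝ × ℝ → ℝ) (p : ℝ × ℝ) : ℝ := fderiv ℝ φ p (1, 0)

/-- Classical partial derivative in the `y`-direction. -/
def pdy (φ : ℝ × ℝ → ℝ) (p : ℝ × ℝ) : ℝ := fderiv ℝ φ p (0, 1)

/-- `g` is a weak `x`-partial derivative of `u` on `s`. -/
def HasWeakDerivXOn (s : Set (ℝ × ℝ)) (u g : ℝ × ℝ → ℝ) : Prop :=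
  LocallyIntegrableOn u s volume ∧ LocallyIntegrableOn g s volume ∧
  ∀ φ : ℝ × ℝ → ℝ, IsTestOn s φ →
    ∫ p in s, u p * pdx φ p = - ∫ p in s, g p * φ p

/-- `g` is a weak `y`-partial derivative of `u` on `s`. -/
def HasWeakDerivYOn (s : Set (ℝ × ℝ)) (u g : ℝ × ℝ → ℝ) : Prop :=
  LocallyIntegrableOn u s volume ∧ LocallyIntegrableOn g s volume ∧
  ∀ φ : ℝ × ℝ → ℝ, IsTestOn s φ →
    ∫ p in s, u p * pdy φ p = - ∫ p in s, g p * φ p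

/-- Test functions on `Ω`. -/
def IsTest (φ : ℝ × ℝ → ℝ) : Prop := IsTestOn Omega φ

/-- Membership in the weighted Sobolev space `𝓗¹(Ω)`, with weak derivatives `gx, gy`:
`u ∈ L²(Ω)`, `gx = ∂ₓu`, `gy = ∂_y u` weakly, and `y^α₁ gx, x^α₂ gy ∈ L²(Ω)`. -/
structure MemH1 (α₁ α₂ : ℝ) (u gx gy : ℝ × ℝ → ℝ) : Prop where
  memL2 : MemLp u 2 (volume.restrict Omega)
  weakX : HasWeakDerivXOn Omega u gx
  weakY : HasWeakDerivYOn Omega u gy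
  wgx : MemLp (fun p => p.2 ^ α₁ * gx p) 2 (volume.restrict Omega)
  wgy : MemLp (fun p => p.1 ^ α₂ * gy p) 2 (volume.restrict Omega)

/-- The `𝓗¹(Ω)` norm of `u` (with weak derivatives `gx, gy`). -/
def H1Norm (α₁ α₂ : ℝ) (u gx gy : ℝ × ℝ → ℝ) : ℝ :=
  Real.sqrt ((∫ p in Omega, (u p) ^ 2) +
    (∫ p in Omega, (p.2 ^ α₁ * gx p) ^ 2) +
    (∫ p in Omega, (p.1 ^ α₂ * gy p) ^ 2))

/-- Membership in `𝓗₀¹(Ω)`: member of `𝓗¹(Ω)` approximable in the `𝓗¹` norm by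
test functions. -/
def MemH10 (α₁ α₂ : ℝ) (u gx gy : ℝ × ℝ → ℝ) : Prop :=
  MemH1 α₁ α₂ u gx gy ∧
  ∀ ε : ℝ, 0 < ε → ∃ φ : ℝ × ℝ → ℝ, IsTest φ ∧
    H1Norm α₁ α₂ (fun p => u p - φ p) (fun p => gx p - pdx φ p)
      (fun p => gy p - pdy φ p) < ε

/-- Membership in `H₀(Ω) = {u ∈ 𝓗₀¹(Ω) : ∫_Ω V u² < ∞}`. -/
def MemH0 (α₁ α₂ : ℝ) (V u gx gy : ℝ × ℝ → ℝ) : Prop :=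
  MemH10 α₁ α₂ u gx gy ∧
  IntegrableOn (fun p => V p * (u p) ^ 2) Omega volume

/-- The bilinear form `a(u,v)` associated with the sub-elliptic operator with potential `V`. -/
def aForm (α₁ α₂ : ℝ) (V u gx gy v hx hy : ℝ × ℝ → ℝ) : ℝ :=
  ∫ p in Omega, ((p.2 ^ α₁ * gx p) * (p.2 ^ α₁ * hx p) +
    (p.1 ^ α₂ * gy p) * (p.1 ^ α₂ * hy p) + V p * u p * v p)

/-- The bilinear form `a₁(u,v)` (no potential). -/
def a1Form (α₁ α₂ : ℝ) (u gx gy v hx hy : ℝ × ℝ → ℝ) : ℝ :=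
  ∫ p in Omega, ((p.2 ^ α₁ * gx p) * (p.2 ^ α₁ * hx p) +
    (p.1 ^ α₂ * gy p) * (p.1 ^ α₂ * hy p))

/-- Membership in `S_p = {V ∈ L^p(Ω) : V ≥ 0 a.e., ‖V‖_{L^p(Ω)} ≤ M}`. -/
def MemSp (ppow M : ℝ) (V : ℝ × ℝ → ℝ) : Prop :=
  MemLp V (ENNReal.ofReal ppow) (volume.restrict Omega) ∧
  (∀ᵐ p ∂(volume.restrict Omega), 0 ≤ V p) ∧
  eLpNorm V (ENNReal.ofReal ppow) (volume.restrict Omega) ≤ ENNReal.ofReal M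

/-- `u` (with weak derivatives `gx, gy`) is an eigenfunction of the sub-elliptic operator
with potential `V` for the eigenvalue `lam`. -/
def IsEigenfun (α₁ α₂ : ℝ) (V : ℝ × ℝ → ℝ) (lam : ℝ) (u gx gy : ℝ × ℝ → ℝ) : Prop :=
  MemH0 α₁ α₂ V u gx gy ∧
  ∀ v hx hy : ℝ × ℝ → ℝ, MemH0 α₁ α₂ V v hx hy →
    aForm α₁ α₂ V u gx gy v hx hy = lam * ∫ p in Omega, u p * v p

/-- The first eigenvalue `λ₁(V) = inf { a(u,u) : u ∈ H₀(Ω), ‖u‖_{L²} = 1 }`. -/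
def lam1 (α₁ α₂ : ℝ) (V : ℝ × ℝ → ℝ) : ℝ :=
  sInf { r | ∃ u gx gy : ℝ × ℝ → ℝ, MemH0 α₁ α₂ V u gx gy ∧
    (∫ p in Omega, (u p) ^ 2) = 1 ∧ r = aForm α₁ α₂ V u gx gy u gx gy }

/-- `sup { a(u,u) : u ∈ span(φ), ‖u‖_{L²(Ω)} = 1 }` for a finite family `φ` with
weak derivatives `φx, φy`. -/
def rayleighSup (α₁ α₂ : ℝ) (V : ℝ × ℝ → ℝ) {k : ℕ} (φ φx φy : Fin k → ℝ × ℝ → ℝ) : ℝ :=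
  sSup { s | ∃ c : Fin k → ℝ,
    (∫ p in Omega, (∑ i, c i * φ i p) ^ 2) = 1 ∧
    s = aForm α₁ α₂ V (fun p => ∑ i, c i * φ i p) (fun p => ∑ i, c i * φx i p)
      (fun p => ∑ i, c i * φy i p) (fun p => ∑ i, c i * φ i p)
      (fun p => ∑ i, c i * φx i p) (fun p => ∑ i, c i * φy i p) }

/-- The set of values `sup { a(u,u) : u ∈ E, ‖u‖ = 1 }` over `k`-dimensional
subspaces `E` of `H₀(Ω)` (represented by `L²(Ω)`-linearly independent families of
`k` elements of `H₀(Ω)`). -/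
def minmaxSet (α₁ α₂ : ℝ) (V : ℝ × ℝ → ℝ) (k : ℕ) : Set ℝ :=
  { r | ∃ φ φx φy : Fin k → ℝ × ℝ → ℝ,
      (∀ i, MemH0 α₁ α₂ V (φ i) (φx i) (φy i)) ∧
      (∀ c : Fin k → ℝ, (∀ᵐ p ∂(volume.restrict Omega), ∑ i, c i * φ i p = 0) → c = 0) ∧
      r = rayleighSup α₁ α₂ V φ φx φy }

/-- The `k`-th eigenvalue via the min-max principle. -/
def lamk (α₁ α₂ : ℝ) (V : ℝ × ℝ → ℝ) (k : ℕ) : ℝ := sInf (minmaxSet α₁ α₂ V k)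

/-- Membership in `U = (𝓗₀¹(Ω) ∩ L^{2q}(Ω)) \ {0}`. -/
def MemU (α₁ α₂ qe : ℝ) (u gx gy : ℝ × ℝ → ℝ) : Prop :=
  MemH10 α₁ α₂ u gx gy ∧
  MemLp u (ENNReal.ofReal (2 * qe)) (volume.restrict Omega) ∧
  ¬ (∀ᵐ p ∂(volume.restrict Omega), u p = 0)

/-- The functional `J(u) = (a₁(u,u) + M ‖u‖_{L^{2q}(Ω)}²) / ‖u‖_{L²(Ω)}²`. -/
def Jfun (α₁ α₂ M qe : ℝ) (u gx gy : ℝ × ℝ → ℝ) : ℝ :=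
  (a1Form α₁ α₂ u gx gy u gx gy +
    M * (∫ p in Omega, |u p| ^ (2 * qe)) ^ (1 / qe)) / (∫ p in Omega, (u p) ^ 2)

/-! Every point `(x, y)` of the square satisfies `x ≤ y ^ α₁` or `y ≤ x ^ α₂`, as soon as
`α₁ * α₂ ≤ 1`. On the vertical segment of length `x ^ α₂` above `(x, 0)`, where `u` vanishes, the
one-dimensional Friedrichs inequality reads `∫ u² dy ≤ (1/2) (x ^ α₂)² ∫ (∂_y u)² dy`: the square
of the length is exactly the degenerate weight. Integrating over `x` controls `u` on the region
`y ≤ x ^ α₂`, and by symmetry horizontal segments control it on the region `x ≤ y ^ α₁`. -/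

lemma sq_integral_le_measureReal_univ_mul {X : Type*} [MeasurableSpace X] {μ : Measure X}
    [IsFiniteMeasure μ] {f : X → ℝ} (hf : MemLp f 2 μ) :
    (∫ x, f x ∂μ) ^ 2 ≤ μ.real univ * ∫ x, f x ^ 2 ∂μ := by
  rcases eq_zero_or_neZero μ with rfl | _
  · simp
  have jensen : (⨍ x, f x ∂μ) ^ 2 ≤ ⨍ x, f x ^ 2 ∂μ :=
    even_two.convexOn_pow.map_average_le (by fun_prop) isClosed_univ (by simp)
      (hf.integrable one_le_two) hf.integrable_sq
  have hμ : 0 < μ.real univ := measureReal_univ_pos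
  rw [average_eq, average_eq, smul_eq_mul, smul_eq_mul, mul_pow] at jensen
  calc (∫ x, f x ∂μ) ^ 2
      = μ.real univ ^ 2 * ((μ.real univ)⁻¹ ^ 2 * (∫ x, f x ∂μ) ^ 2) := by field_simp
    _ ≤ μ.real univ ^ 2 * ((μ.real univ)⁻¹ * ∫ x, f x ^ 2 ∂μ) := by gcongr
    _ = μ.real univ * ∫ x, f x ^ 2 ∂μ := by field_simp

lemma setIntegral_le_add_of_subset_union {X : Type*} [MeasurableSpace X] {μ : Measure X}
    {f : X → ℝ} {r s t : Set X} (hf : 0 ≤ f) (hs : IntegrableOn f s μ) (ht : IntegrableOn f t μ)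
    (hr : r ⊆ s ∪ t) : ∫ x in r, f x ∂μ ≤ ∫ x in s, f x ∂μ + ∫ x in t, f x ∂μ := by
  rw [← integral_add_measure hs ht]
  exact integral_mono_measure
    ((Measure.restrict_mono_set μ hr).trans (Measure.restrict_union_le s t))
    (ae_of_all _ hf) (Integrable.add_measure hs ht)

lemma setIntegral_preimage_swap {X Y E : Type*} [MeasurableSpace X] [MeasurableSpace Y]
    [NormedAddCommGroup E] [NormedSpace ℝ E] {μ : Measure X} {ν : Measure Y} [SFinite μ] [SFinite ν]
    (f : X × Y → E) (s : Set (X × Y)) :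
    ∫ p in Prod.swap ⁻¹' s, f p.swap ∂ν.prod μ = ∫ p in s, f p ∂μ.prod ν :=
  Measure.measurePreserving_swap.setIntegral_preimage_emb
    MeasurableEquiv.prodComm.measurableEmbedding f s

section OneDimensional

variable {g : ℝ → ℝ} {a : ℝ}

lemma sq_le_mul_setIntegral_deriv_sq (hg : ContDiff ℝ 1 g) (ha : g a = 0) {x : ℝ} (hx : a ≤ x) :
    g x ^ 2 ≤ (x - a) * ∫ t in Ioc a x, deriv g t ^ 2 := by
  have hg' : Continuous (deriv g) := hg.continuous_deriv le_rfl
  have ftc : ∫ t in Ioc a x, deriv g t = g x := by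
    rw [← intervalIntegral.integral_of_le hx,
      intervalIntegral.integral_deriv_eq_sub (fun t _ ↦ hg.differentiable one_ne_zero t)
        (hg'.intervalIntegrable _ _), ha, sub_zero]
  have hL2 : MemLp (deriv g) 2 (volume.restrict (Ioc a x)) :=
    (memLp_two_iff_integrable_sq hg'.aestronglyMeasurable).2 (hg'.pow 2).integrableOn_Ioc
  simpa [ftc, hx] using sq_integral_le_measureReal_univ_mul hL2

lemma setIntegral_sq_le_mul_setIntegral_deriv_sq (hg : ContDiff ℝ 1 g) (ha : g a = 0) (b : ℝ) :
    ∫ x in Ioc a b, g x ^ 2 ≤ (b - a) ^ 2 / 2 * ∫ x in Ioc a b, deriv g x ^ 2 := by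
  rcases lt_or_ge b a with hba | hab
  · simp [Ioc_eq_empty_of_le hba.le]
  set K := ∫ x in Ioc a b, deriv g x ^ 2
  have pointwise : ∀ x ∈ Ioc a b, g x ^ 2 ≤ (x - a) * K := fun x hx ↦ by
    have hx₀ : 0 ≤ x - a := sub_nonneg.2 hx.1.le
    have hK : ∫ t in Ioc a x, deriv g t ^ 2 ≤ K :=
      setIntegral_mono_set ((hg.continuous_deriv le_rfl).pow 2).integrableOn_Ioc
        (ae_of_all _ fun _ ↦ sq_nonneg _) (Ioc_subset_Ioc_right hx.2).eventuallyLE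
    exact (sq_le_mul_setIntegral_deriv_sq hg ha hx.1.le).trans (by gcongr)
  calc ∫ x in Ioc a b, g x ^ 2
      ≤ ∫ x in Ioc a b, (x - a) * K :=
        setIntegral_mono_on (hg.continuous.pow 2).integrableOn_Ioc
          (by fun_prop : Continuous fun x ↦ (x - a) * K).integrableOn_Ioc
          measurableSet_Ioc pointwise
    _ = (b - a) ^ 2 / 2 * K := by
        rw [integral_mul_const, ← intervalIntegral.integral_of_le hab,
          intervalIntegral.integral_comp_sub_right (fun x ↦ x), integral_id]
        ring

end OneDimensional

/-- The part `{(y, t) | y ∈ s, 0 < t ≤ b y}` of a product lying below the graph of `b` over `s`.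
The upper boundary is included so that two such regions can cover a square without exceptional
null sets. -/
def subgraphOn {Y : Type*} (s : Set Y) (b : Y → ℝ) : Set (Y × ℝ) :=
  {p | p.1 ∈ s ∧ p.2 ∈ Ioc 0 (b p.1)}

section Subgraph

variable {Y : Type*} {s : Set Y} {b : Y → ℝ}

lemma indicator_subgraphOn_apply {E : Type*} [Zero E] (f : Y × ℝ → E) (y : Y) (t : ℝ) :
    (subgraphOn s b).indicator f (y, t) =
      s.indicator (fun y ↦ (Ioc 0 (b y)).indicator (fun t ↦ f (y, t)) t) y := by
  by_cases hy : y ∈ s <;> by_cases ht : t ∈ Ioc 0 (b y) <;>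
    simp [subgraphOn, indicator, hy, ht, -mem_Ioc]

variable {E : Type*} [NormedAddCommGroup E] [NormedSpace ℝ E]

lemma integral_indicator_subgraphOn (f : Y × ℝ → E) (y : Y) :
    ∫ t, (subgraphOn s b).indicator f (y, t) =
      s.indicator (fun y ↦ ∫ t in Ioc 0 (b y), f (y, t)) y := by
  simp only [indicator_subgraphOn_apply]
  by_cases hy : y ∈ s <;> simp [hy, integral_indicator measurableSet_Ioc]

variable [MeasurableSpace Y]

lemma measurableSet_subgraphOn (hs : MeasurableSet s) (hb : Measurable b) :
    MeasurableSet (subgraphOn s b) :=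
  measurableSet_region_between_oc measurable_const hb hs

variable {μ : Measure Y} {f : Y × ℝ → E}

lemma integrableOn_setIntegral_of_subgraphOn (hs : MeasurableSet s) (hb : Measurable b)
    (hf : IntegrableOn f (subgraphOn s b) (μ.prod volume)) :
    IntegrableOn (fun y ↦ ∫ t in Ioc 0 (b y), f (y, t)) s μ := by
  rw [← integrable_indicator_iff hs]
  simpa only [integral_indicator_subgraphOn] using
    (hf.integrable_indicator (measurableSet_subgraphOn hs hb)).integral_prod_left

variable [SFinite μ]

lemma setIntegral_subgraphOn (hs : MeasurableSet s) (hb : Measurable b)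
    (hf : IntegrableOn f (subgraphOn s b) (μ.prod volume)) :
    ∫ p in subgraphOn s b, f p ∂(μ.prod volume) =
      ∫ y in s, (∫ t in Ioc 0 (b y), f (y, t)) ∂μ := by
  have hR := measurableSet_subgraphOn hs hb
  rw [← integral_indicator hR, integral_prod _ (hf.integrable_indicator hR)]
  simp only [integral_indicator_subgraphOn]
  exact integral_indicator hs

lemma setIntegral_subgraphOn_sq_le {u : Y × ℝ → ℝ} (hs : MeasurableSet s) (hb : Measurable b)
    (hu : ∀ y ∈ s, ContDiff ℝ 1 fun t ↦ u (y, t)) (hu₀ : ∀ y ∈ s, u (y, 0) = 0)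
    (hint : IntegrableOn (fun p ↦ u p ^ 2) (subgraphOn s b) (μ.prod volume))
    (hint' : IntegrableOn (fun p ↦ (b p.1 * deriv (fun t ↦ u (p.1, t)) p.2) ^ 2)
      (subgraphOn s b) (μ.prod volume)) :
    ∫ p in subgraphOn s b, u p ^ 2 ∂(μ.prod volume) ≤
      1 / 2 * ∫ p in subgraphOn s b, (b p.1 * deriv (fun t ↦ u (p.1, t)) p.2) ^ 2
        ∂(μ.prod volume) := by
  rw [setIntegral_subgraphOn hs hb hint, setIntegral_subgraphOn hs hb hint',
    ← integral_const_mul]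
  refine setIntegral_mono_on (integrableOn_setIntegral_of_subgraphOn hs hb hint)
    ((integrableOn_setIntegral_of_subgraphOn hs hb hint').const_mul _) hs fun y hy ↦ ?_
  calc ∫ t in Ioc 0 (b y), u (y, t) ^ 2
      ≤ (b y - 0) ^ 2 / 2 * ∫ t in Ioc 0 (b y), deriv (fun t ↦ u (y, t)) t ^ 2 :=
        setIntegral_sq_le_mul_setIntegral_deriv_sq (hu y hy) (hu₀ y hy) (b y)
    _ = 1 / 2 * ∫ t in Ioc 0 (b y), (b y * deriv (fun t ↦ u (y, t)) t) ^ 2 := by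
        simp only [mul_pow, integral_const_mul]
        ring

end Subgraph

section PartialDerivatives

variable {u : ℝ × ℝ → ℝ}

lemma deriv_comp_prodMk_left {x y : ℝ} (hu : DifferentiableAt ℝ u (x, y)) :
    deriv (fun t ↦ u (x, t)) y = pdy u (x, y) :=
  (hu.hasFDerivAt.comp_hasDerivAt y
    ((hasDerivAt_const y x).prodMk (hasDerivAt_id y))).deriv

lemma pdy_comp_swap {p : ℝ × ℝ} (hu : DifferentiableAt ℝ u p.swap) :
    pdy (u ∘ Prod.swap) p = pdx u p.swap := by
  have hswap : HasFDerivAt Prod.swap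
      ((ContinuousLinearMap.snd ℝ ℝ ℝ).prod (ContinuousLinearMap.fst ℝ ℝ ℝ)) p :=
    hasFDerivAt_snd.prodMk hasFDerivAt_fst
  rw [pdy, (hu.hasFDerivAt.comp p hswap).fderiv]
  rfl

lemma continuous_pdx (hu : ContDiff ℝ 1 u) : Continuous (pdx u) :=
  (hu.continuous_fderiv one_ne_zero).clm_apply continuous_const

lemma continuous_pdy (hu : ContDiff ℝ 1 u) : Continuous (pdy u) :=
  (hu.continuous_fderiv one_ne_zero).clm_apply continuous_const

end PartialDerivatives

section UnitSquare

variable {u : ℝ × ℝ → ℝ} {a b : ℝ → ℝ}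

lemma omega_ae_eq_Icc : Omega =ᵐ[volume] Icc (0 : ℝ × ℝ) 1 := by
  rw [Prod.zero_eq_mk, Prod.one_eq_mk, ← Icc_prod_Icc]
  exact Measure.set_prod_ae_eq Ioo_ae_eq_Icc Ioo_ae_eq_Icc

lemma setIntegral_omega_eq_Icc (f : ℝ × ℝ → ℝ) :
    ∫ p in Omega, f p = ∫ p in Icc 0 1, f p :=
  setIntegral_congr_set omega_ae_eq_Icc

lemma subgraphOn_Ioo_subset_Icc (hb : ∀ x ∈ Ioo (0 : ℝ) 1, b x ≤ 1) :
    subgraphOn (Ioo 0 1) b ⊆ Icc 0 1 := fun _ ⟨hx, hy⟩ ↦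
  ⟨⟨hx.1.le, hy.1.le⟩, ⟨hx.2.le, hy.2.trans (hb _ hx)⟩⟩

lemma swap_preimage_Icc_zero_one : Prod.swap ⁻¹' Icc (0 : ℝ × ℝ) 1 = Icc 0 1 :=
  (OrderIso.prodComm (α := ℝ) (β := ℝ)).preimage_Icc 0 1

lemma setIntegral_Icc_comp_swap (f : ℝ × ℝ → ℝ) :
    ∫ p in Icc (0 : ℝ × ℝ) 1, f p.swap = ∫ p in Icc 0 1, f p := by
  have hswap := setIntegral_preimage_swap (μ := volume) (ν := volume) f (Icc 0 1)
  rwa [swap_preimage_Icc_zero_one] at hswap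

lemma setIntegral_subgraphOn_Ioo_sq_le (hu : ContDiff ℝ 1 u)
    (hbottom : ∀ x ∈ Ioo (0 : ℝ) 1, u (x, 0) = 0) (hb : Continuous b)
    (hb₁ : ∀ x ∈ Ioo (0 : ℝ) 1, b x ≤ 1) :
    ∫ p in subgraphOn (Ioo 0 1) b, u p ^ 2 ≤
      1 / 2 * ∫ p in Icc 0 1, (b p.1 * pdy u p) ^ 2 := by
  have hsub : subgraphOn (Ioo 0 1) b ⊆ Icc 0 1 := subgraphOn_Ioo_subset_Icc hb₁
  have hderiv (p : ℝ × ℝ) : deriv (fun t ↦ u (p.1, t)) p.2 = pdy u p :=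
    deriv_comp_prodMk_left (hu.differentiable one_ne_zero _)
  have hint : IntegrableOn (fun p ↦ u p ^ 2) (Icc 0 1) := (hu.continuous.pow 2).integrableOn_Icc
  have hint' : IntegrableOn (fun p ↦ (b p.1 * pdy u p) ^ 2) (Icc 0 1) :=
    (((hb.comp continuous_fst).mul (continuous_pdy hu)).pow 2).integrableOn_Icc
  have friedrichs := setIntegral_subgraphOn_sq_le (μ := volume) measurableSet_Ioo
    hb.measurable (fun x _ ↦ hu.comp (contDiff_prodMk_right x)) hbottom (hint.mono_set hsub)
    (by simp only [hderiv]; exact hint'.mono_set hsub)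
  simp only [hderiv] at friedrichs
  refine friedrichs.trans (mul_le_mul_of_nonneg_left ?_ (by norm_num))
  exact setIntegral_mono_set hint' (ae_of_all _ fun _ ↦ sq_nonneg _) hsub.eventuallyLE

lemma setIntegral_swap_preimage_subgraphOn_Ioo_sq_le (hu : ContDiff ℝ 1 u)
    (hleft : ∀ y ∈ Ioo (0 : ℝ) 1, u (0, y) = 0) (ha : Continuous a)
    (ha₁ : ∀ y ∈ Ioo (0 : ℝ) 1, a y ≤ 1) :
    ∫ p in Prod.swap ⁻¹' subgraphOn (Ioo 0 1) a, u p ^ 2 ≤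
      1 / 2 * ∫ p in Icc 0 1, (a p.2 * pdx u p) ^ 2 := by
  have hpdx (p : ℝ × ℝ) : pdy (u ∘ Prod.swap) p = pdx u p.swap :=
    pdy_comp_swap (hu.differentiable one_ne_zero _)
  calc ∫ p in Prod.swap ⁻¹' subgraphOn (Ioo 0 1) a, u p ^ 2
      = ∫ p in subgraphOn (Ioo 0 1) a, (u ∘ Prod.swap) p ^ 2 :=
        setIntegral_preimage_swap (fun p ↦ u p.swap ^ 2) _
    _ ≤ 1 / 2 * ∫ p in Icc 0 1, (a p.1 * pdy (u ∘ Prod.swap) p) ^ 2 :=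
        setIntegral_subgraphOn_Ioo_sq_le (hu.comp (contDiff_snd.prodMk contDiff_fst)) hleft ha ha₁
    _ = 1 / 2 * ∫ p in Icc 0 1, (a p.2 * pdx u p) ^ 2 := by
        simp only [hpdx]
        rw [← setIntegral_Icc_comp_swap fun p ↦ (a p.2 * pdx u p) ^ 2]
        rfl

theorem setIntegral_omega_sq_le_of_cover (hu : ContDiff ℝ 1 u)
    (hleft : ∀ y ∈ Ioo (0 : ℝ) 1, u (0, y) = 0) (hbottom : ∀ x ∈ Ioo (0 : ℝ) 1, u (x, 0) = 0)
    (ha : Continuous a) (hb : Continuous b)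
    (ha₁ : ∀ y ∈ Ioo (0 : ℝ) 1, a y ≤ 1) (hb₁ : ∀ x ∈ Ioo (0 : ℝ) 1, b x ≤ 1)
    (hab : ∀ x ∈ Ioo (0 : ℝ) 1, ∀ y ∈ Ioo (0 : ℝ) 1, x ≤ a y ∨ y ≤ b x) :
    ∫ p in Omega, u p ^ 2 ≤
      1 / 2 * ∫ p in Omega, ((a p.2 * pdx u p) ^ 2 + (b p.1 * pdy u p) ^ 2) := by
  have hu_sq : IntegrableOn (fun p ↦ u p ^ 2) (Icc 0 1) := (hu.continuous.pow 2).integrableOn_Icc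
  have hx_sq : IntegrableOn (fun p ↦ (a p.2 * pdx u p) ^ 2) (Icc 0 1) :=
    (((ha.comp continuous_snd).mul (continuous_pdx hu)).pow 2).integrableOn_Icc
  have hy_sq : IntegrableOn (fun p ↦ (b p.1 * pdy u p) ^ 2) (Icc 0 1) :=
    (((hb.comp continuous_fst).mul (continuous_pdy hu)).pow 2).integrableOn_Icc
  set S := Prod.swap ⁻¹' subgraphOn (Ioo 0 1) a
  set T := subgraphOn (Ioo 0 1) b
  have hS : S ⊆ Icc 0 1 :=
    (preimage_mono (subgraphOn_Ioo_subset_Icc ha₁)).trans swap_preimage_Icc_zero_one.subset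
  have hT : T ⊆ Icc 0 1 := subgraphOn_Ioo_subset_Icc hb₁
  have cover : Omega ⊆ S ∪ T := fun p ⟨hx, hy⟩ ↦
    (hab _ hx _ hy).imp (fun h ↦ ⟨hy, hx.1, h⟩) fun h ↦ ⟨hx, hy.1, h⟩
  calc ∫ p in Omega, u p ^ 2
      ≤ (∫ p in S, u p ^ 2) + ∫ p in T, u p ^ 2 :=
        setIntegral_le_add_of_subset_union (fun _ ↦ sq_nonneg _) (hu_sq.mono_set hS)
          (hu_sq.mono_set hT) cover
    _ ≤ 1 / 2 * (∫ p in Icc 0 1, (a p.2 * pdx u p) ^ 2) +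
          1 / 2 * ∫ p in Icc 0 1, (b p.1 * pdy u p) ^ 2 :=
        add_le_add (setIntegral_swap_preimage_subgraphOn_Ioo_sq_le hu hleft ha ha₁)
          (setIntegral_subgraphOn_Ioo_sq_le hu hbottom hb hb₁)
    _ = 1 / 2 * ∫ p in Omega, ((a p.2 * pdx u p) ^ 2 + (b p.1 * pdy u p) ^ 2) := by
        rw [setIntegral_omega_eq_Icc, integral_add hx_sq hy_sq, mul_add]

end UnitSquare

lemma le_rpow_or_le_rpow {α β x y : ℝ} (hβ : 0 ≤ β) (hαβ : α * β ≤ 1) (hy₀ : 0 < y)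
    (hy₁ : y ≤ 1) : x ≤ y ^ α ∨ y ≤ x ^ β := by
  refine or_iff_not_imp_left.2 fun hxy ↦ ?_
  calc y = y ^ (1 : ℝ) := (Real.rpow_one y).symm
    _ ≤ y ^ (α * β) := Real.rpow_le_rpow_of_exponent_ge hy₀ hy₁ hαβ
    _ = (y ^ α) ^ β := Real.rpow_mul hy₀.le α β
    _ ≤ x ^ β := Real.rpow_le_rpow (Real.rpow_nonneg hy₀.le α) (not_le.1 hxy).le hβ

theorem degenerate_poincare_general {α₁ α₂ : ℝ} (hα₁ : 0 ≤ α₁) (hα₂ : 0 ≤ α₂)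
    (hα : α₁ * α₂ ≤ 1) {u : ℝ × ℝ → ℝ} (hu : ContDiff ℝ 1 u)
    (hleft : ∀ y ∈ Ioo (0 : ℝ) 1, u (0, y) = 0) (hbottom : ∀ x ∈ Ioo (0 : ℝ) 1, u (x, 0) = 0) :
    ∫ p in Omega, u p ^ 2 ≤
      1 / 2 * ∫ p in Omega, ((p.2 ^ α₁ * pdx u p) ^ 2 + (p.1 ^ α₂ * pdy u p) ^ 2) :=
  setIntegral_omega_sq_le_of_cover hu hleft hbottom
    (Real.continuous_rpow_const hα₁) (Real.continuous_rpow_const hα₂)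
    (fun _ hy ↦ Real.rpow_le_one hy.1.le hy.2.le hα₁)
    (fun _ hx ↦ Real.rpow_le_one hx.1.le hx.2.le hα₂)
    (fun _ _ _ hy ↦ le_rpow_or_le_rpow hα₂ hα hy.1 hy.2.le)

/-- Poincaré inequality for the degenerate weights: there is `C > 0`
such that `∫_Ω u² ≤ C ∫_Ω |y^{α₁}∂ₓu|² + |x^{α₂}∂_yu|²` for every `u ∈ C_c^∞(Ω)`. -/
theorem degenerate_poincare (α₁ α₂ : ℝ)
    (hα₁ : α₁ ∈ Ioo (0:ℝ) (1/2)) (hα₂ : α₂ ∈ Ioo (0:ℝ) (1/2)) :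
    ∃ C : ℝ, 0 < C ∧ ∀ u : ℝ × ℝ → ℝ, IsTest u →
      (∫ p in Omega, (u p) ^ 2) ≤
        C * ∫ p in Omega, ((p.2 ^ α₁ * pdx u p) ^ 2 + (p.1 ^ α₂ * pdy u p) ^ 2) := by
  obtain ⟨hα₁_pos, hα₁_lt⟩ := hα₁
  obtain ⟨hα₂_pos, hα₂_lt⟩ := hα₂
  refine ⟨1 / 2, by norm_num, fun u ⟨hu, _, hsupp⟩ ↦ ?_⟩
  have hzero : ∀ p ∉ Omega, u p = 0 := fun p hp ↦
    image_eq_zero_of_notMem_tsupport fun h ↦ hp (hsupp h)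
  exact degenerate_poincare_general hα₁_pos.le hα₂_pos.le (by nlinarith)
    (hu.of_le (by exact_mod_cast le_top))
    (fun y _ ↦ hzero _ fun h ↦ h.1.1.false) (fun x _ ↦ hzero _ fun h ↦ h.2.1.false)
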